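/- For every real α with 0 ≤ α < 1, ∫_{-∞}^{∞} ₕe(-α x²) e^{-x²} dx = √π · (1 + ∑_{r=1}^∞ C(-1/2, r) α^r h_r), where C(-1/2, r) = (-1/2)(-1/2 - 1)⋯(-1/2 - r + 1)/r! is the generalized binomial coefficient. -/

import Mathlib

open Real MeasureTheory

/-- The `n`-th harmonic number `h_n = ∑_{r=1}^n 1/r`. -/
noncomputable def harm (n : ℕ) : ℝ := ∑ r ∈ Finset.range n, 1 / (r + 1 : ℝ)

/-- The harmonic based exponential function `ₕe(x) = 1 + ∑_{n=1}^∞ h_n x^n / n!`. -/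
noncomputable def he (x : ℝ) : ℝ :=
  1 + ∑' n : ℕ, harm (n + 1) * x ^ (n + 1) / (Nat.factorial (n + 1) : ℝ)

/-- The generalized binomial coefficient
`C(-1/2, r) = (-1/2)(-1/2 - 1)⋯(-1/2 - r + 1)/r!`. -/
noncomputable def genBinomHalf (r : ℕ) : ℝ :=
  (∏ i ∈ Finset.range r, (-(1:ℝ)/2 - i)) / (Nat.factorial r : ℝ)

theorem harm_nonneg' (n : ℕ) : 0 ≤ harm n := by
  unfold harm; positivity

theorem harm_le' (n : ℕ) : harm n ≤ n := by
  unfold harm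
  calc _ ≤ ∑ r ∈ Finset.range n, (1:ℝ) := by
        apply Finset.sum_le_sum
        intro r _
        rw [div_le_one (by positivity)]
        have : (0:ℝ) ≤ r := by positivity
        linarith
    _ = n := by simp

/-- Coefficients with the constant term included. -/
noncomputable def cc (n : ℕ) : ℝ := if n = 0 then 1 else harm n

theorem cc_nonneg (n : ℕ) : 0 ≤ cc n := by
  unfold cc; split_ifs
  · norm_num
  · exact harm_nonneg' n

theorem cc_le (n : ℕ) : cc n ≤ n + 1 := by
  unfold cc; split_ifs with h
  · simp
  · linarith [harm_le' n]

theorem int_moment (n : ℕ) :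
    Integrable (fun x : ℝ => (x ^ 2) ^ n * Real.exp (-x ^ 2)) ∧
    ∫ x : ℝ, (x ^ 2) ^ n * Real.exp (-x ^ 2) = √π * ∏ i ∈ Finset.range n, ((1:ℝ) / 2 + i) := by
  constructor
  · have h := integrable_rpow_mul_exp_neg_mul_sq (b := 1) one_pos (s := ((2 * n : ℕ) : ℝ))
      (lt_of_lt_of_le (by norm_num) (Nat.cast_nonneg _))
    refine h.congr (Filter.Eventually.of_forall fun x => ?_)
    simp only [Real.rpow_natCast, pow_mul]
    ring_nf
  · have h := integral_comp_abs (f := fun x : ℝ => (x ^ 2) ^ n * Real.exp (-x ^ 2))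
    simp only [sq_abs] at h
    rw [h]
    have h2 := integral_rpow_mul_exp_neg_rpow (p := 2) (q := ((2 * n : ℕ) : ℝ)) two_pos
      (lt_of_lt_of_le (by norm_num) (Nat.cast_nonneg _))
    have h3 : ∫ x in Set.Ioi (0:ℝ), (x ^ 2) ^ n * Real.exp (-x ^ 2) =
        1 / 2 * Real.Gamma (n + 1 / 2) := by
      have e : (((2 * n : ℕ) : ℝ) + 1) / 2 = n + 1 / 2 := by push_cast; ring
      rw [e] at h2
      rw [← h2]
      congr 1
      ext x
      simp only [Real.rpow_natCast, pow_mul, Real.rpow_two]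
    rw [h3]
    have h4 : Real.Gamma (n + 1 / 2) = √π * ∏ i ∈ Finset.range n, ((1:ℝ) / 2 + i) := by
      clear h h2 h3
      induction n with
      | zero => simpa using Real.Gamma_one_half_eq
      | succ k ih =>
        rw [Finset.prod_range_succ, ← mul_assoc, ← ih]
        have : ((k + 1 : ℕ) : ℝ) + 1 / 2 = (k + 1 / 2) + 1 := by push_cast; ring
        rw [this, Real.Gamma_add_one (by positivity)]
        ring
    rw [h4]; ring

theorem prod_le_fact (n : ℕ) : ∏ i ∈ Finset.range n, ((1:ℝ) / 2 + i) ≤ (n.factorial : ℝ) := by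
  induction n with
  | zero => simp
  | succ k ih =>
    rw [Finset.prod_range_succ, Nat.factorial_succ, Nat.cast_mul, mul_comm]
    apply mul_le_mul _ ih (by positivity) (by positivity)
    push_cast; linarith

theorem genBinom_eq (n : ℕ) :
    genBinomHalf n = (-1) ^ n * (∏ i ∈ Finset.range n, ((1:ℝ) / 2 + i)) / (n.factorial : ℝ) := by
  unfold genBinomHalf
  congr 1
  induction n with
  | zero => simp
  | succ k ih => rw [Finset.prod_range_succ, Finset.prod_range_succ, ih]; ring

theorem summable_bd (α : ℝ) (h0 : 0 ≤ α) (h1 : α < 1) :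
    Summable fun n : ℕ => ((n : ℝ) + 1) * α ^ n := by
  have hn : ‖α‖ < 1 := by rwa [Real.norm_of_nonneg h0]
  have a := summable_pow_mul_geometric_of_norm_lt_one 1 hn
  have b := summable_geometric_of_lt_one h0 h1
  refine (a.add b).congr fun n => ?_
  simp; ring

theorem he_hasSum (x : ℝ) : HasSum (fun n => cc n * x ^ n / (n.factorial : ℝ)) (he x) := by
  have hs : Summable (fun n => cc n * x ^ n / (n.factorial : ℝ)) := by
    rw [← summable_nat_add_iff 1]
    have a := (Real.summable_pow_div_factorial |x|).mul_left (2 * |x|)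
    refine Summable.of_norm_bounded a fun n => ?_
    rw [norm_div, norm_mul, norm_pow, Real.norm_of_nonneg (cc_nonneg _), Real.norm_eq_abs,
      Real.norm_of_nonneg (by positivity), Nat.factorial_succ, Nat.cast_mul, ← mul_div_assoc,
      div_le_div_iff₀ (by positivity) (by positivity)]
    have h := cc_le (n + 1)
    have h' : cc (n + 1) ≤ 2 * ((n + 1 : ℕ) : ℝ) := by
      push_cast at h ⊢
      have : (0:ℝ) ≤ n := by positivity
      linarith
    calc cc (n+1) * |x| ^ (n+1) * (n.factorial : ℝ)
        ≤ (2 * ((n + 1 : ℕ) : ℝ)) * |x| ^ (n+1) * (n.factorial : ℝ) := by gcongr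
      _ = _ := by ring
  have : he x = ∑' n, cc n * x ^ n / (n.factorial : ℝ) := by
    rw [hs.tsum_eq_zero_add]
    simp [he, cc]
  rw [this]
  exact hs.hasSum

/-- For `0 ≤ α < 1`,
`∫_{-∞}^{∞} ₕe(-αx²) e^{-x²} dx = √π (1 + ∑_{r=1}^∞ C(-1/2,r) α^r h_r)`. -/
theorem he_gaussian_squared_integral (α : ℝ) (h0 : 0 ≤ α) (h1 : α < 1) :
    (∫ x : ℝ, he (-α * x ^ 2) * Real.exp (-x ^ 2)) =
      Real.sqrt π *
        (1 + ∑' r : ℕ, genBinomHalf (r + 1) * α ^ (r + 1) * harm (r + 1)) := by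
  let P : ℕ → ℝ := fun n => ∏ i ∈ Finset.range n, ((1:ℝ) / 2 + i)
  have hP0 : ∀ n, 0 ≤ P n := fun n => Finset.prod_nonneg fun i _ => by positivity
  let F : ℕ → ℝ → ℝ := fun n x =>
    (cc n * (-α) ^ n / (n.factorial : ℝ)) * ((x ^ 2) ^ n * Real.exp (-x ^ 2))
  have hFi : ∀ n, Integrable (F n) := fun n => (int_moment n).1.const_mul _
  have hF : ∀ n, ∫ x, F n x = √π * (genBinomHalf n * α ^ n * cc n) := fun n => by
    simp only [F]
    rw [integral_const_mul, (int_moment n).2, genBinom_eq, neg_pow α]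
    ring
  have hbd : ∀ n, P n / (n.factorial : ℝ) ≤ 1 := fun n => by
    rw [div_le_one (by positivity)]; exact prod_le_fact n
  have hFn : ∀ n, ∫ x, ‖F n x‖ = √π * (P n / (n.factorial : ℝ) * α ^ n * cc n) := fun n => by
    have : ∀ x, ‖F n x‖ =
        (cc n * α ^ n / (n.factorial : ℝ)) * ((x ^ 2) ^ n * Real.exp (-x ^ 2)) := fun x => by
      simp only [F]
      rw [norm_mul, norm_div, norm_mul, norm_pow, norm_neg, Real.norm_of_nonneg (cc_nonneg _),
        Real.norm_of_nonneg h0, Real.norm_of_nonneg (by positivity),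
        Real.norm_of_nonneg (by positivity)]
    simp only [this]
    rw [integral_const_mul, (int_moment n).2]
    simp only [P]
    ring
  have hle : ∀ n, P n / (n.factorial : ℝ) * α ^ n * cc n ≤ (n + 1) * α ^ n := fun n => by
    have := hbd n
    have := cc_le n
    have := cc_nonneg n
    calc _ ≤ 1 * α ^ n * (n + 1 : ℝ) := by gcongr
      _ = _ := by ring
  have hsum : Summable fun n => P n / (n.factorial : ℝ) * α ^ n * cc n :=
    Summable.of_nonneg_of_le (fun n => by
      have := hP0 n
      have := cc_nonneg n
      positivity) hle (summable_bd α h0 h1)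
  have hFs : Summable fun n => ∫ x, ‖F n x‖ := by
    simp only [hFn]
    exact hsum.mul_left _
  have key := integral_tsum_of_summable_integral_norm hFi hFs
  have hpt : ∀ x, ∑' n, F n x = he (-α * x ^ 2) * Real.exp (-x ^ 2) := fun x => by
    rw [← ((he_hasSum (-α * x ^ 2)).mul_right (Real.exp (-x ^ 2))).tsum_eq]
    refine tsum_congr fun n => ?_
    simp only [F, mul_pow]
    ring
  simp only [hpt, hF] at key
  rw [← key, tsum_mul_left]
  congr 1
  have hs2 : Summable fun n => genBinomHalf n * α ^ n * cc n := by
    refine Summable.of_norm_bounded hsum fun n => le_of_eq ?_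
    rw [genBinom_eq, norm_mul, norm_mul, norm_div, norm_mul, norm_pow, norm_neg, norm_one, one_pow,
      one_mul, Real.norm_of_nonneg (hP0 n), norm_pow, Real.norm_of_nonneg h0,
      Real.norm_of_nonneg (cc_nonneg n), Real.norm_of_nonneg (by positivity)]
  rw [hs2.tsum_eq_zero_add]
  simp [cc, genBinomHalf]
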